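/- arXiv:2509.02501 — 2 statements merged into one kernel-verified Lean document; each statement's English description precedes it below -/
import Mathlib

section
/- Let n ≥ 1 be an integer and let ρ be an irreducible finite-dimensional complex representation of SL(2, ℤ/nℤ). If ρ(t) has exactly two distinct eigenvalues, then ρ is two-dimensional. -/
/-- The group `SL(2, ℤ/nℤ)`. -/
abbrev SL2 (n : ℕ) := Matrix.SpecialLinearGroup (Fin 2) (ZMod n)

/-- The element `t = [[1,1],[0,1]]` of `SL(2, ℤ/nℤ)`. -/
def tGen (n : ℕ) : SL2 n := ⟨!![1, 1; 0, 1], by simp [Matrix.det_fin_two_of]⟩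

/-- A representation is irreducible if the space is nonzero and the only invariant
subspaces are `⊥` and `⊤`. -/
def IsIrreducibleRep {G V : Type} [Group G] [AddCommGroup V] [Module ℂ V]
    (ρ : Representation ℂ G V) : Prop :=
  Nontrivial V ∧ ∀ p : Submodule ℂ V, (∀ g : G, p.map (ρ g) ≤ p) → p = ⊥ ∨ p = ⊤

open Matrix in
/-- The element `[[1,0],[-1,1]]`. -/
def uGen (n : ℕ) : SL2 n := ⟨!![1, 0; -1, 1], by simp [Matrix.det_fin_two_of]⟩

/-- upper elementary matrix -/
def upE (n : ℕ) (c : ZMod n) : SL2 n := ⟨!![1, c; 0, 1], by simp [Matrix.det_fin_two_of]⟩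

/-- lower elementary matrix -/
def loE (n : ℕ) (c : ZMod n) : SL2 n := ⟨!![1, 0; c, 1], by simp [Matrix.det_fin_two_of]⟩

lemma upE_coe (n : ℕ) (c : ZMod n) :
    ((upE n c : SL2 n) : Matrix (Fin 2) (Fin 2) (ZMod n)) = !![1, c; 0, 1] := rfl

lemma loE_coe (n : ℕ) (c : ZMod n) :
    ((loE n c : SL2 n) : Matrix (Fin 2) (Fin 2) (ZMod n)) = !![1, 0; c, 1] := rfl

lemma tGen_coe (n : ℕ) :
    ((tGen n : SL2 n) : Matrix (Fin 2) (Fin 2) (ZMod n)) = !![1, 1; 0, 1] := rfl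

lemma uGen_coe (n : ℕ) :
    ((uGen n : SL2 n) : Matrix (Fin 2) (Fin 2) (ZMod n)) = !![1, 0; -1, 1] := rfl

lemma upE_mem (n : ℕ) [NeZero n] (H : Submonoid (SL2 n)) (ht : tGen n ∈ H) (c : ZMod n) :
    upE n c ∈ H := by
  have key : ∀ k : ℕ, upE n (k : ZMod n) ∈ H := by
    intro k
    induction k with
    | zero =>
      have : upE n ((0 : ℕ) : ZMod n) = 1 := by
        ext i j; fin_cases i <;> fin_cases j <;> simp [upE_coe]
      rw [this]; exact H.one_mem
    | succ k ih =>
      have : upE n ((k + 1 : ℕ) : ZMod n) = tGen n * upE n (k : ZMod n) := by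
        ext i j; fin_cases i <;> fin_cases j <;> simp [upE_coe, tGen_coe, Matrix.SpecialLinearGroup.coe_mul, Matrix.mul_apply, Fin.sum_univ_two]
      rw [this]; exact H.mul_mem ht ih
  have := key c.val
  rwa [ZMod.natCast_zmod_val] at this

lemma loE_mem (n : ℕ) [NeZero n] (H : Submonoid (SL2 n)) (hu : uGen n ∈ H) (c : ZMod n) :
    loE n c ∈ H := by
  have key : ∀ k : ℕ, loE n (-(k : ZMod n)) ∈ H := by
    intro k
    induction k with
    | zero =>
      have : loE n (-((0 : ℕ) : ZMod n)) = 1 := by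
        ext i j; fin_cases i <;> fin_cases j <;> simp [loE_coe]
      rw [this]; exact H.one_mem
    | succ k ih =>
      have : loE n (-((k + 1 : ℕ) : ZMod n)) = uGen n * loE n (-(k : ZMod n)) := by
        ext i j; fin_cases i <;> fin_cases j <;> simp [loE_coe, uGen_coe, Matrix.SpecialLinearGroup.coe_mul, Matrix.mul_apply, Fin.sum_univ_two]
      rw [this]; exact H.mul_mem hu ih
  have := key (-c).val
  rwa [ZMod.natCast_zmod_val, neg_neg] at this

lemma base_mem (n : ℕ) [NeZero n] (H : Submonoid (SL2 n)) (ht : tGen n ∈ H) (hu : uGen n ∈ H)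
    (g : SL2 n) (hg : g 1 0 = 0) : g ∈ H := by
  have hdet : g 0 0 * g 1 1 = 1 := by
    have := g.det_coe
    rw [Matrix.det_fin_two, hg] at this
    simpa using this
  have : g = upE n (g 0 0) * loE n (-(g 1 1)) * upE n (g 0 0) * upE n (-1) * loE n 1 * upE n (-1)
      * upE n (g 1 1 * g 0 1) := by
    ext i j
    fin_cases i <;> fin_cases j <;>
      simp [upE_coe, loE_coe, Matrix.SpecialLinearGroup.coe_mul, Matrix.mul_apply, Fin.sum_univ_two, hg] <;> grind
  rw [this]
  have h1 := upE_mem n H ht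
  have h2 := loE_mem n H hu
  exact H.mul_mem (H.mul_mem (H.mul_mem (H.mul_mem (H.mul_mem (H.mul_mem (h1 _) (h2 _)) (h1 _))
    (h1 _)) (h2 _)) (h1 _)) (h1 _)

lemma gen_mem (n : ℕ) [NeZero n] (H : Submonoid (SL2 n)) (ht : tGen n ∈ H) (hu : uGen n ∈ H)
    (g : SL2 n) : g ∈ H := by
  have h1 := upE_mem n H ht
  have h2 := loE_mem n H hu
  have upm : ∀ c (g : SL2 n), upE n c * g ∈ H → g ∈ H := by
    intro c g h
    have : g = upE n (-c) * (upE n c * g) := by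
      ext i j; fin_cases i <;> fin_cases j <;> simp [upE_coe, Matrix.SpecialLinearGroup.coe_mul, Matrix.mul_apply, Matrix.vecMul, dotProduct, Fin.sum_univ_two]
    rw [this]; exact H.mul_mem (h1 _) h
  have lom : ∀ c (g : SL2 n), loE n c * g ∈ H → g ∈ H := by
    intro c g h
    have : g = loE n (-c) * (loE n c * g) := by
      ext i j; fin_cases i <;> fin_cases j <;> simp [loE_coe, Matrix.SpecialLinearGroup.coe_mul, Matrix.mul_apply, Matrix.vecMul, dotProduct, Fin.sum_univ_two]
    rw [this]; exact H.mul_mem (h2 _) h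
  have key : ∀ N m k : ℕ, m + k ≤ N → ∀ g : SL2 n, g 0 0 = m → g 1 0 = k → g ∈ H := by
    intro N
    induction N with
    | zero =>
      intro m k hmk g _ hk
      obtain rfl : k = 0 := by omega
      exact base_mem n H ht hu g (by simpa using hk)
    | succ N ih =>
      intro m k hmk g hm hk
      rcases Nat.eq_zero_or_pos k with rfl | hk0
      · exact base_mem n H ht hu g (by simpa using hk)
      rcases Nat.eq_zero_or_pos m with rfl | hm0
      · apply upm 1
        apply lom (-1)
        apply base_mem n H ht hu
        simp [upE_coe, loE_coe, Matrix.SpecialLinearGroup.coe_mul, Matrix.mul_apply, Matrix.vecMul, dotProduct, Fin.sum_univ_two, hm, hk]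
      rcases le_total k m with h | h
      · apply upm (-1)
        apply ih (m - k) k (by omega)
        · simp [upE_coe, Matrix.SpecialLinearGroup.coe_mul, Matrix.mul_apply, Matrix.vecMul, dotProduct, Fin.sum_univ_two, hm, hk, Nat.cast_sub h]; ring
        · simp [upE_coe, Matrix.SpecialLinearGroup.coe_mul, Matrix.mul_apply, Matrix.vecMul, dotProduct, Fin.sum_univ_two, hk]
      · apply lom (-1)
        apply ih m (k - m) (by omega)
        · simp [loE_coe, Matrix.SpecialLinearGroup.coe_mul, Matrix.mul_apply, Matrix.vecMul, dotProduct, Fin.sum_univ_two, hm]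
        · simp [loE_coe, Matrix.SpecialLinearGroup.coe_mul, Matrix.mul_apply, Matrix.vecMul, dotProduct, Fin.sum_univ_two, hm, hk, Nat.cast_sub h]; ring
  exact key _ (g 0 0).val (g 1 0).val le_rfl g (by simp) (by simp)

lemma braid (n : ℕ) : tGen n * uGen n * tGen n = uGen n * tGen n * uGen n := by
  ext i j; fin_cases i <;> fin_cases j <;> simp [tGen_coe, uGen_coe, Matrix.SpecialLinearGroup.coe_mul, Matrix.mul_apply, Fin.sum_univ_two]

lemma tGen_pow (n : ℕ) : tGen n ^ n = 1 := by
  have : ∀ k : ℕ, tGen n ^ k = upE n k := by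
    intro k
    induction k with
    | zero => ext i j; fin_cases i <;> fin_cases j <;> simp [upE_coe]
    | succ k ih =>
      rw [pow_succ, ih]
      ext i j; fin_cases i <;> fin_cases j <;>
        simp [upE_coe, tGen_coe, Matrix.SpecialLinearGroup.coe_mul, Matrix.mul_apply, Fin.sum_univ_two, add_comm]
  rw [this]
  ext i j; fin_cases i <;> fin_cases j <;> simp [upE_coe]

open Polynomial in
lemma quad_of_pow {V : Type} [AddCommGroup V] [Module ℂ V] [FiniteDimensional ℂ V]
    (n : ℕ) (hn : 1 ≤ n) (A : Module.End ℂ V) (hA : A ^ n = 1) (a b : ℂ) (hab : a ≠ b)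
    (hs : spectrum ℂ A = {a, b}) :
    (A - algebraMap ℂ _ a) * (A - algebraMap ℂ _ b) = 0 := by
  have hint : IsIntegral ℂ A := Algebra.IsIntegral.isIntegral A
  have hdvd : minpoly ℂ A ∣ X ^ n - C 1 := by
    apply minpoly.dvd
    simp [hA]
  have hsep : (X ^ n - C (1 : ℂ)).Separable :=
    separable_X_pow_sub_C 1 (by exact_mod_cast (by omega : n ≠ 0)) one_ne_zero
  have hsep' := hsep.of_dvd hdvd
  have hnd : (minpoly ℂ A).roots.Nodup := nodup_roots hsep'
  have hroots : (minpoly ℂ A).roots = ({a, b} : Finset ℂ).val := by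
    rw [Multiset.Nodup.ext hnd (Finset.nodup _)]
    intro x
    rw [mem_roots (minpoly.ne_zero hint), ← Module.End.hasEigenvalue_iff_isRoot,
      Module.End.hasEigenvalue_iff_mem_spectrum, hs]
    simp
  have hprod := (IsAlgClosed.splits (minpoly ℂ A)).eq_prod_roots
  rw [hroots, minpoly.monic hint] at hprod
  have h0 := minpoly.aeval ℂ A
  rw [hprod] at h0
  simpa [hab] using h0

/-- If `ρ` is an irreducible finite-dimensional complex representation of `SL(2, ℤ/nℤ)`
and `ρ(t)` has exactly two distinct eigenvalues, then `ρ` is two-dimensional. -/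
theorem stmt1 (n : ℕ) (hn : 1 ≤ n)
    (V : Type) [AddCommGroup V] [Module ℂ V] [FiniteDimensional ℂ V]
    (ρ : Representation ℂ (SL2 n) V)
    (hirr : IsIrreducibleRep ρ)
    (h2 : (spectrum ℂ (ρ (tGen n))).ncard = 2) :
    Module.finrank ℂ V = 2 := by
  have : NeZero n := ⟨by omega⟩
  obtain ⟨a, b, hab, hs⟩ := Set.ncard_eq_two.mp h2
  obtain ⟨hnt, hirr⟩ := hirr
  set A := ρ (tGen n) with hAdef
  set B := ρ (uGen n) with hBdef
  have hq := quad_of_pow n hn A (by rw [hAdef, ← map_pow, tGen_pow, map_one]) a b hab hs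
  have hbr : A * B * A = B * A * B := by
    simp only [hAdef, hBdef, ← map_mul, braid]
  have hirr' : ∀ p : Submodule ℂ V, (∀ x ∈ p, A x ∈ p) → (∀ x ∈ p, B x ∈ p) →
      p = ⊥ ∨ p = ⊤ := by
    intro p hA hB
    apply hirr p
    let H : Submonoid (SL2 n) :=
      { carrier := {g | ∀ x ∈ p, ρ g x ∈ p}
        one_mem' := by intro x hx; simpa using hx
        mul_mem' := by
          intro g h hg hh x hx
          rw [map_mul]
          exact hg _ (hh _ hx) }
    intro g
    rw [Submodule.map_le_iff_le_comap]
    exact gen_mem n H hA hB g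
  have hqB : (B - algebraMap ℂ _ b) * (B - algebraMap ℂ _ a) = 0 := by
    set W := ρ (tGen n * uGen n * tGen n) with hW
    set W' := ρ (tGen n * uGen n * tGen n)⁻¹ with hW'
    have hWW : W * W' = 1 := by rw [hW, hW', ← map_mul, mul_inv_cancel, map_one]
    have hWA : W * A = B * W := by
      rw [hW, hAdef, hBdef, ← map_mul, ← map_mul]
      congr 1
      conv_lhs => rw [braid]
      simp only [mul_assoc]
    have h1 : ∀ c : ℂ, W * (A - algebraMap ℂ _ c) = (B - algebraMap ℂ _ c) * W := by
      intro c
      rw [mul_sub, sub_mul, hWA, Algebra.commutes]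
    have h3 : (A - algebraMap ℂ _ b) * (A - algebraMap ℂ _ a) = 0 := by
      rw [← hq]
      simp only [mul_sub, sub_mul, Algebra.commutes, ← map_mul, mul_comm a b]
      abel
    calc (B - algebraMap ℂ _ b) * (B - algebraMap ℂ _ a)
        = (B - algebraMap ℂ _ b) * ((B - algebraMap ℂ _ a) * W) * W' := by
          rw [mul_assoc, mul_assoc, hWW, mul_one]
      _ = W * ((A - algebraMap ℂ _ b) * (A - algebraMap ℂ _ a)) * W' := by
          rw [← h1, ← mul_assoc, ← h1, mul_assoc W]
      _ = 0 := by rw [h3]; simp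
  have hqA' : ∀ x, A (A x) = (a + b) • A x - (a * b) • x := by
    intro x
    have := LinearMap.congr_fun hq x
    simp only [Module.End.mul_apply, LinearMap.sub_apply, Module.algebraMap_end_apply,
      LinearMap.zero_apply, map_sub, map_smul] at this
    linear_combination (norm := module) this
  have hqB' : ∀ x, B (B x - a • x) = b • (B x - a • x) := by
    intro x
    have := LinearMap.congr_fun hqB x
    simp only [Module.End.mul_apply, LinearMap.sub_apply, Module.algebraMap_end_apply,
      LinearMap.zero_apply, sub_eq_zero] at this
    exact this
  have eva : Module.End.HasEigenvalue A a := by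
    rw [Module.End.hasEigenvalue_iff_mem_spectrum, hs]; simp
  have evb : Module.End.HasEigenvalue A b := by
    rw [Module.End.hasEigenvalue_iff_mem_spectrum, hs]; simp
  obtain ⟨v, hv⟩ := eva.exists_hasEigenvector
  obtain ⟨z, hz⟩ := evb.exists_hasEigenvector
  have hAv := hv.apply_eq_smul
  have hAz := hz.apply_eq_smul
  have hw0 : B v - a • v ≠ 0 := by
    intro h
    rw [sub_eq_zero] at h
    rcases hirr' (Submodule.span ℂ {v}) (by
      intro x hx
      obtain ⟨c, rfl⟩ := Submodule.mem_span_singleton.mp hx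
      rw [map_smul, hAv]
      exact Submodule.smul_mem _ _ (Submodule.smul_mem _ _ (Submodule.mem_span_singleton_self v)))
      (by
      intro x hx
      obtain ⟨c, rfl⟩ := Submodule.mem_span_singleton.mp hx
      rw [map_smul, h]
      exact Submodule.smul_mem _ _ (Submodule.smul_mem _ _ (Submodule.mem_span_singleton_self v)))
      with hp | hp
    · exact hv.2 (Submodule.span_singleton_eq_bot.mp hp)
    · have hzm : z ∈ Submodule.span ℂ {v} := hp ▸ Submodule.mem_top
      obtain ⟨c, rfl⟩ := Submodule.mem_span_singleton.mp hzm
      rw [map_smul, hAv] at hAz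
      have : (a - b) • (c • v) = 0 := by
        linear_combination (norm := module) hAz
      rcases smul_eq_zero.mp this with h' | h'
      · exact hab (sub_eq_zero.mp h')
      · exact hz.2 h'
  set w := B v - a • v with hw
  have hBw : B w = b • w := hqB' v
  have hBAw : B (A w) = a • A w - (a ^ 2) • w := by
    have h1 : A (B (A v)) = B (A (B v)) := LinearMap.congr_fun hbr v
    rw [hAv, map_smul, map_smul] at h1
    rw [hw, map_sub, map_sub, ← h1, map_smul, map_smul, hAv, map_smul]
    module
  have hspan : Submodule.span ℂ {w, A w} = ⊤ := by
    have m1 : w ∈ Submodule.span ℂ {w, A w} := Submodule.subset_span (by simp)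
    have m2 : A w ∈ Submodule.span ℂ {w, A w} := Submodule.subset_span (by simp)
    rcases hirr' (Submodule.span ℂ {w, A w}) (by
      intro x hx
      obtain ⟨c, d, rfl⟩ := Submodule.mem_span_pair.mp hx
      rw [map_add, map_smul, map_smul, hqA']
      exact add_mem (Submodule.smul_mem _ _ m2) (Submodule.smul_mem _ _
        (sub_mem (Submodule.smul_mem _ _ m2) (Submodule.smul_mem _ _ m1))))
      (by
      intro x hx
      obtain ⟨c, d, rfl⟩ := Submodule.mem_span_pair.mp hx
      rw [map_add, map_smul, map_smul, hBw, hBAw]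
      exact add_mem (Submodule.smul_mem _ _ (Submodule.smul_mem _ _ m1)) (Submodule.smul_mem _ _
        (sub_mem (Submodule.smul_mem _ _ m2) (Submodule.smul_mem _ _ m1)))) with hp | hp
    · rw [hp] at m1
      exact absurd ((Submodule.mem_bot ℂ).mp m1) hw0
    · exact hp
  apply le_antisymm
  · have h' : Module.finrank ℂ (Submodule.span ℂ ({w, A w} : Set V)) ≤ 2 := by
      classical
      have h := finrank_span_finset_le_card (R := ℂ) (M := V) ({w, A w} : Finset V)
      have hc := Finset.card_le_two (a := w) (b := A w)
      have e : (({w, A w} : Finset V) : Set V) = {w, A w} := by push_cast; rfl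
      rw [e] at h
      exact h.trans hc
    rwa [hspan, finrank_top] at h'
  · have hli : LinearIndependent ℂ ![v, z] := by
      apply Module.End.eigenvectors_linearIndependent' A ![a, b]
      · intro i j h
        fin_cases i <;> fin_cases j <;> simp_all
      · intro i
        fin_cases i
        · exact hv
        · exact hz
    simpa using hli.fintype_card_le_finrank
end

section
/- Let n ≥ 1 be an integer and let ρ be an irreducible finite-dimensional complex representation of SL(2, ℤ/nℤ). If ρ(t) has exactly three distinct eigenvalues, then ρ is three-dimensional. -/
open Module

theorem tGen_pow_s2 (n : ℕ) (k : ℕ) : ((tGen n ^ k : SL2 n) : Matrix (Fin 2) (Fin 2) (ZMod n)) =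
    !![1, (k : ZMod n); 0, 1] := by
  induction k with
  | zero => simp [Matrix.one_fin_two]
  | succ k ih =>
    rw [pow_succ, Matrix.SpecialLinearGroup.coe_mul, ih]
    simp [tGen, add_comm]

def wGen (n : ℕ) : SL2 n := ⟨!![0, 1; -1, 0], by simp [Matrix.det_fin_two_of]⟩

def eUp (n : ℕ) (x : ZMod n) : SL2 n := ⟨!![1, x; 0, 1], by simp [Matrix.det_fin_two_of]⟩

def eLo (n : ℕ) (x : ZMod n) : SL2 n := ⟨!![1, 0; x, 1], by simp [Matrix.det_fin_two_of]⟩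

theorem gen_SL2 (n : ℕ) (hn : 1 ≤ n) (H : Subgroup (SL2 n)) (ht : tGen n ∈ H) (hw : wGen n ∈ H)
    (g : SL2 n) : g ∈ H := by
  have : NeZero n := ⟨by omega⟩
  have hup : ∀ x, eUp n x ∈ H := by
    intro x
    have : eUp n x = tGen n ^ x.val := by
      apply Subtype.ext
      rw [tGen_pow_s2]; simp [eUp]
    rw [this]; exact H.pow_mem ht _
  have hlo : ∀ x, eLo n x ∈ H := by
    intro x
    have : eLo n x = wGen n * eUp n (-x) * (wGen n)⁻¹ := by
      rw [eq_mul_inv_iff_mul_eq]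
      apply Subtype.ext
      rw [Matrix.SpecialLinearGroup.coe_mul, Matrix.SpecialLinearGroup.coe_mul]
      simp [eUp, eLo, wGen]
    rw [this]; exact H.mul_mem (H.mul_mem hw (hup _)) (H.inv_mem hw)
  have main : ∀ m : ℕ, ∀ g : SL2 n, (g 1 0).val ≤ m → g ∈ H := by
    intro m
    induction m using Nat.strong_induction_on with
    | _ m ih =>
      intro g hg
      obtain ⟨a, b, c, d, hM⟩ : ∃ a b c d, (g : Matrix (Fin 2) (Fin 2) (ZMod n)) = !![a, b; c, d] :=
        ⟨_, _, _, _, Matrix.eta_fin_two _⟩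
      have hdet : a * d - b * c = 1 := by
        have := g.2
        rw [hM, Matrix.det_fin_two_of] at this
        exact this
      have hc : g 1 0 = c := by rw [hM]; rfl
      rw [hc] at hg
      by_cases h0 : c = 0
      · subst h0
        have had : a * d = 1 := by simpa using hdet
        have : g = eUp n a * eLo n (-d) * eUp n a * wGen n ^ 3 * eUp n (d * b) := by
          apply Subtype.ext
          rw [hM]
          simp only [Matrix.SpecialLinearGroup.coe_mul, Matrix.SpecialLinearGroup.coe_pow]
          simp only [eUp, eLo, wGen, pow_succ, pow_zero, one_mul, Matrix.mul_fin_two]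
          ext i j
          fin_cases i <;> fin_cases j <;> simp <;> grind
        rw [this]
        exact H.mul_mem (H.mul_mem (H.mul_mem (H.mul_mem (hup _) (hlo _)) (hup _))
          (H.pow_mem hw _)) (hup _)
      · have hcpos : 0 < c.val := Nat.pos_of_ne_zero fun h => h0 ((ZMod.val_eq_zero c).1 h)
        let q := a.val / c.val
        let r := a.val % c.val
        have hr : r < c.val := Nat.mod_lt _ hcpos
        have hlt : r < n := hr.trans (ZMod.val_lt c)
        have har : a - q * c = (r : ZMod n) := by
          have : ((c.val * q + r : ℕ) : ZMod n) = (a.val : ℕ) := by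
            rw [Nat.div_add_mod]
          push_cast at this
          rw [ZMod.natCast_zmod_val, ZMod.natCast_zmod_val] at this
          linear_combination -this
        have hin : wGen n ^ 3 * (eUp n (-(q : ZMod n)) * g) ∈ H := by
          refine ih ((wGen n ^ 3 * (eUp n (-(q : ZMod n)) * g)) 1 0).val ?_ _ le_rfl
          have : (wGen n ^ 3 * (eUp n (-(q : ZMod n)) * g)) 1 0 = (r : ZMod n) := by
            rw [← har]
            simp only [Matrix.SpecialLinearGroup.coe_mul, Matrix.SpecialLinearGroup.coe_pow, hM]
            simp [eUp, wGen, pow_succ]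
            try ring
          rw [this, ZMod.val_natCast_of_lt hlt]
          omega
        rw [H.mul_mem_cancel_left (H.pow_mem hw _), H.mul_mem_cancel_left (hup _)] at hin
        exact hin
  exact main _ g le_rfl

theorem pair_count {ι : Type*} [Fintype ι] [DecidableEq ι] (l : ι → ℂ) (T : Finset ℂ)
    (hT : ∀ i, l i ∈ T) :
    (Fintype.card ι) ^ 2 ≤ T.card * Fintype.card {p : ι × ι // l p.1 = l p.2} := by
  classical
  have h1 : Fintype.card ι = ∑ v ∈ T, (Finset.univ.filter (fun i => l i = v)).card := by
    rw [← Finset.card_univ]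
    exact Finset.card_eq_sum_card_fiberwise (fun i _ => hT i)
  have h2 : Fintype.card {p : ι × ι // l p.1 = l p.2}
      = ∑ v ∈ T, (Finset.univ.filter (fun i => l i = v)).card ^ 2 := by
    rw [Fintype.card_subtype,
      Finset.card_eq_sum_card_fiberwise (f := fun p : ι × ι => l p.1) (t := T) (fun p _ => hT p.1)]
    refine Finset.sum_congr rfl fun v _ => ?_
    rw [sq, ← Finset.card_product]
    congr 1
    ext p
    simp only [Finset.mem_filter, Finset.mem_univ, true_and, Finset.mem_product]
    constructor
    · rintro ⟨a, b⟩; exact ⟨b, a ▸ b⟩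
    · rintro ⟨a, b⟩; exact ⟨a.trans b.symm, a⟩
  rw [h2, h1]
  exact sq_sum_le_card_mul_sum_sq

noncomputable def adm {V : Type*} [AddCommGroup V] [Module ℂ V] (f : End ℂ V) :
    End ℂ V →ₗ[ℂ] End ℂ V := LinearMap.mulLeft ℂ f - LinearMap.mulRight ℂ f

theorem adm_apply {V : Type*} [AddCommGroup V] [Module ℂ V] (f X : End ℂ V) :
    adm f X = f * X - X * f := rfl

theorem exists_eigenbasis {V : Type*} [AddCommGroup V] [Module ℂ V] [FiniteDimensional ℂ V]
    (f : End ℂ V) (hf : f.IsSemisimple) :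
    ∃ (ι : Type) (_ : Fintype ι) (b : Basis ι ℂ V) (l : ι → ℂ), ∀ i, f (b i) = l i • b i := by
  classical
  have hint : DirectSum.IsInternal (fun μ : ℂ => f.eigenspace μ) :=
    (DirectSum.isInternal_submodule_iff_iSupIndep_and_iSup_eq_top _).2
      ⟨f.eigenspaces_iSupIndep, hf.iSup_eigenspace_eq_top⟩
  let b := hint.collectedBasis (fun μ => Module.finBasis ℂ (f.eigenspace μ))
  have : Fintype (Σ μ : ℂ, Fin (finrank ℂ (f.eigenspace μ))) := FiniteDimensional.fintypeBasisIndex b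
  refine ⟨_, this, b, fun i => i.1, fun i => ?_⟩
  exact End.mem_eigenspace_iff.1 (hint.collectedBasis_mem _ i)

theorem rank_bound {V : Type*} [AddCommGroup V] [Module ℂ V] [FiniteDimensional ℂ V]
    (f : End ℂ V) (hf : f.IsSemisimple) (T : Finset ℂ) (hT : ∀ μ, f.HasEigenvalue μ → μ ∈ T) :
    T.card * finrank ℂ (LinearMap.range (adm f)) + finrank ℂ V ^ 2 ≤ T.card * finrank ℂ V ^ 2 := by
  classical
  obtain ⟨ι, _, b, l, hb⟩ := exists_eigenbasis f hf
  have hl : ∀ i, l i ∈ T := fun i => hT _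
    (End.hasEigenvalue_of_hasEigenvector (x := b i) ⟨End.mem_eigenspace_iff.2 (hb i), b.ne_zero i⟩)
  have hc := pair_count l T hl
  have hd : finrank ℂ V = Fintype.card ι := finrank_eq_card_basis b
  have hrn := LinearMap.finrank_range_add_finrank_ker (adm f)
  have hE : finrank ℂ (End ℂ V) = finrank ℂ V ^ 2 := by
    rw [Module.finrank_linearMap, sq]
  have hli : LinearIndependent ℂ (fun p : {p : ι × ι // l p.1 = l p.2} => b.end p.1) :=
    b.end.linearIndependent.comp _ Subtype.val_injective
  have hker : ∀ p : {p : ι × ι // l p.1 = l p.2}, b.end p.1 ∈ LinearMap.ker (adm f) := by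
    rintro ⟨⟨i, j⟩, hp⟩
    simp only at hp
    rw [LinearMap.mem_ker, adm_apply, sub_eq_zero]
    refine b.ext fun k => ?_
    simp only [End.mul_apply, hb, map_smul, Basis.end_apply_apply]
    split_ifs with h
    · subst h; rw [hb, hp]
    · simp
  have hcard : Fintype.card {p : ι × ι // l p.1 = l p.2} ≤ finrank ℂ (LinearMap.ker (adm f)) := by
    have : LinearIndependent ℂ (fun p : {p : ι × ι // l p.1 = l p.2} =>
      (⟨b.end p.1, hker p⟩ : LinearMap.ker (adm f))) :=
      LinearIndependent.of_comp (Submodule.subtype _) hli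
    exact this.fintype_card_le_finrank
  rw [hE] at hrn
  have := Nat.mul_le_mul_left T.card hcard
  rw [← hrn, mul_add, hrn, hd]
  omega

theorem tr_nondeg {V : Type*} [AddCommGroup V] [Module ℂ V] [FiniteDimensional ℂ V]
    (N : End ℂ V) (h : ∀ X : End ℂ V, LinearMap.trace ℂ V (N * X) = 0) : N = 0 := by
  ext v
  rw [LinearMap.zero_apply, ← Module.forall_dual_apply_eq_zero_iff ℂ]
  intro φ
  have := h (φ.smulRight v)
  rw [LinearMap.trace_mul_comm] at this
  have e : φ.smulRight v * N = (φ ∘ₗ N).smulRight v := by ext; simp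
  rw [e, LinearMap.trace_smulRight] at this
  simpa using this

theorem tr_adm {V : Type*} [AddCommGroup V] [Module ℂ V] [FiniteDimensional ℂ V]
    {f N : End ℂ V} (h : ∀ X : End ℂ V, LinearMap.trace ℂ V (N * adm f X) = 0) :
    f * N = N * f := by
  symm
  rw [← sub_eq_zero]
  refine tr_nondeg _ fun X => ?_
  have := h X
  rw [adm_apply, mul_sub, map_sub, ← mul_assoc N X f, LinearMap.trace_mul_comm ℂ (N * X) f] at this
  rw [sub_mul, map_sub, mul_assoc, mul_assoc]
  exact this

noncomputable def trForm {V : Type*} [AddCommGroup V] [Module ℂ V] :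
    End ℂ V →ₗ[ℂ] Dual ℂ (End ℂ V) :=
  (LinearMap.mul ℂ (End ℂ V)).compr₂ (LinearMap.trace ℂ V)

theorem trForm_surj {V : Type*} [AddCommGroup V] [Module ℂ V] [FiniteDimensional ℂ V] :
    Function.Surjective (trForm (V := V)) := by
  refine (LinearMap.injective_iff_surjective_of_finrank_eq_finrank
    Subspace.dual_finrank_eq.symm).1 ?_
  rw [injective_iff_map_eq_zero]
  intro N hN
  exact tr_nondeg N fun X => LinearMap.congr_fun hN X

theorem scott {V : Type*} [AddCommGroup V] [Module ℂ V] [FiniteDimensional ℂ V]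
    (u a D D' : End ℂ V) (hD : D = u * a) (hDD : D * D' = 1)
    (hcomm : ∀ X : End ℂ V, u * X = X * u → D * X = X * D → ∃ c : ℂ, X = c • 1)
    (hcomm' : ∀ X : End ℂ V, u * X = X * u → a * X = X * a → ∃ c : ℂ, X = c • 1) :
    2 * finrank ℂ V ^ 2 ≤ finrank ℂ (LinearMap.range (adm u)) + finrank ℂ (LinearMap.range (adm a))
      + finrank ℂ (LinearMap.range (adm D)) + 2 := by
  classical
  have hE : finrank ℂ (End ℂ V) = finrank ℂ V ^ 2 := by
    rw [Module.finrank_linearMap, sq]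
  let Ru := LinearMap.range (adm u)
  let Ra := LinearMap.range (adm a)
  let RD := LinearMap.range (adm D)
  let al : End ℂ V →ₗ[ℂ] (Ru × Ra) × RD :=
    ((adm u).rangeRestrict.prod (adm a).rangeRestrict).prod (adm D).rangeRestrict
  let be : (Ru × Ra) × RD →ₗ[ℂ] End ℂ V :=
    LinearMap.coprod (LinearMap.coprod (LinearMap.mulRight ℂ a ∘ₗ Ru.subtype)
      (LinearMap.mulLeft ℂ u ∘ₗ Ra.subtype)) (-RD.subtype)
  have hba : LinearMap.range al ≤ LinearMap.ker be := by
    rintro _ ⟨X, rfl⟩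
    rw [LinearMap.mem_ker]
    change adm u X * a + u * adm a X + -(adm D X) = 0
    simp only [adm_apply, hD]
    noncomm_ring
  have hkera : finrank ℂ (LinearMap.ker al) ≤ 1 := by
    have h1 : (1 : End ℂ V) ∈ LinearMap.ker al := by
      rw [LinearMap.mem_ker]
      ext1
      · ext1
        · apply Subtype.ext
          change adm u 1 = 0
          simp [adm_apply]
        · apply Subtype.ext
          change adm a 1 = 0
          simp [adm_apply]
      · apply Subtype.ext
        change adm D 1 = 0
        simp [adm_apply]
    refine finrank_le_one (⟨1, h1⟩ : LinearMap.ker al) ?_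
    rintro ⟨X, hX⟩
    rw [LinearMap.mem_ker] at hX
    have hu : adm u X = 0 := congrArg (fun z => (z.1.1 : End ℂ V)) hX
    have ha : adm a X = 0 := congrArg (fun z => (z.1.2 : End ℂ V)) hX
    rw [adm_apply, sub_eq_zero] at hu ha
    obtain ⟨c, hc⟩ := hcomm' X hu ha
    exact ⟨c, Subtype.ext hc.symm⟩
  have hrange : finrank ℂ (End ℂ V) ≤ finrank ℂ (LinearMap.range be) + 1 := by
    have hann : finrank ℂ (LinearMap.range be).dualAnnihilator ≤ 1 := by
      have hone : ∀ w ∈ (LinearMap.range be).dualAnnihilator, ∃ c : ℂ, c • trForm D' = w := by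
        intro w hw
        obtain ⟨N, rfl⟩ := trForm_surj w
        rw [Submodule.mem_dualAnnihilator] at hw
        have key : ∀ X Y Z : End ℂ V, LinearMap.trace ℂ V
            (N * (adm u X * a + u * adm a Y + -(adm D Z))) = 0 := by
          intro X Y Z
          exact hw _ ⟨(((adm u).rangeRestrict X, (adm a).rangeRestrict Y),
            (adm D).rangeRestrict Z), rfl⟩
        have e1 : u * (a * N) = (a * N) * u := by
          refine tr_adm fun X => ?_
          have := key X 0 0
          simp only [map_zero, mul_zero, add_zero, neg_zero] at this
          rw [mul_assoc, LinearMap.trace_mul_comm, mul_assoc]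
          exact this
        have e2 : a * (N * u) = (N * u) * a := by
          refine tr_adm fun X => ?_
          have := key 0 X 0
          simp only [map_zero, zero_mul, add_zero, neg_zero, zero_add] at this
          rw [mul_assoc]
          exact this
        have e3 : D * N = N * D := by
          refine tr_adm fun X => ?_
          have := key 0 0 X
          simpa only [map_zero, mul_zero, zero_mul, zero_add, mul_neg, map_neg, neg_eq_zero]
            using this
        obtain ⟨c, hc⟩ := hcomm (N * D) (by
            rw [← e3, hD]
            calc u * (u * a * N) = u * (u * (a * N)) := by simp only [mul_assoc]
              _ = u * a * N * u := by rw [e1]; simp only [mul_assoc])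
          (by rw [← mul_assoc, e3])
        refine ⟨c, ?_⟩
        have : N = c • D' := by
          calc N = N * D * D' := by rw [mul_assoc, hDD, mul_one]
            _ = c • D' := by rw [hc]; simp
        rw [this, map_smul]
      by_cases hm : trForm D' ∈ (LinearMap.range be).dualAnnihilator
      · refine finrank_le_one (⟨_, hm⟩ : (LinearMap.range be).dualAnnihilator) ?_
        rintro ⟨w, hw⟩
        obtain ⟨c, hc⟩ := hone w hw
        exact ⟨c, Subtype.ext hc⟩
      · refine finrank_le_one 0 ?_
        rintro ⟨w, hw⟩
        obtain ⟨c, hc⟩ := hone w hw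
        refine ⟨0, Subtype.ext ?_⟩
        by_cases h0 : c = 0
        · simp [← hc, h0]
        · exact absurd ((Submodule.smul_mem_iff _ h0).1 (hc ▸ hw)) hm
    have := Subspace.finrank_add_finrank_dualAnnihilator_eq (LinearMap.range be)
    omega
  have h1 := LinearMap.finrank_range_add_finrank_ker al
  have h2 := LinearMap.finrank_range_add_finrank_ker be
  have h3 := Submodule.finrank_mono hba
  rw [finrank_prod, finrank_prod] at h2
  change _ = finrank ℂ (LinearMap.range (adm u)) + finrank ℂ (LinearMap.range (adm a))
      + finrank ℂ (LinearMap.range (adm D)) at h2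
  omega

theorem rank_bound_le {V : Type*} [AddCommGroup V] [Module ℂ V] [FiniteDimensional ℂ V]
    (f : End ℂ V) (hf : f.IsSemisimple) (T : Finset ℂ) (hT : ∀ μ, f.HasEigenvalue μ → μ ∈ T)
    (k : ℕ) (hk : T.card ≤ k) :
    k * finrank ℂ (LinearMap.range (adm f)) + finrank ℂ V ^ 2 ≤ k * finrank ℂ V ^ 2 := by
  have h := rank_bound f hf T hT
  have h2 : finrank ℂ (LinearMap.range (adm f)) ≤ finrank ℂ V ^ 2 := by
    have := LinearMap.finrank_range_le (adm f)
    rwa [Module.finrank_linearMap, ← sq] at this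
  obtain ⟨e, rfl⟩ := Nat.exists_eq_add_of_le hk
  nlinarith [Nat.mul_le_mul_left e h2]

theorem semisimple_of_pow {V : Type*} [AddCommGroup V] [Module ℂ V] [FiniteDimensional ℂ V]
    (f : End ℂ V) (m : ℕ) (hm : m ≠ 0) (c : ℂ) (hc : c ≠ 0) (h : f ^ m = c • 1) :
    f.IsSemisimple := by
  refine End.isSemisimple_of_squarefree_aeval_eq_zero
    (p := Polynomial.X ^ m - Polynomial.C c) ?_ ?_
  · exact (Polynomial.separable_X_pow_sub_C c (by exact_mod_cast hm) hc).squarefree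
  · simp [h, Algebra.algebraMap_eq_smul_one]

theorem rank_bound_pow {V : Type*} [AddCommGroup V] [Module ℂ V] [FiniteDimensional ℂ V]
    (f : End ℂ V) (m : ℕ) (hm : m ≠ 0) (c : ℂ) (hc : c ≠ 0) (h : f ^ m = c • 1) :
    m * finrank ℂ (LinearMap.range (adm f)) + finrank ℂ V ^ 2 ≤ m * finrank ℂ V ^ 2 := by
  classical
  refine rank_bound_le f (semisimple_of_pow f m hm c hc h)
    (Polynomial.nthRoots m c).toFinset ?_ m
    ((Multiset.toFinset_card_le _).trans (Polynomial.card_nthRoots m c))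
  intro μ hμ
  rw [Multiset.mem_toFinset, Polynomial.mem_nthRoots (Nat.pos_of_ne_zero hm)]
  obtain ⟨v, hv⟩ := hμ.exists_hasEigenvector
  have h1 := hv.pow_apply m
  rw [h] at h1
  simp only [LinearMap.smul_apply, End.one_apply] at h1
  exact (smul_left_injective ℂ hv.2 h1).symm

theorem schur_scalar {G V : Type} [Group G] [AddCommGroup V] [Module ℂ V] [FiniteDimensional ℂ V]
    (ρ : Representation ℂ G V) (hirr : IsIrreducibleRep ρ) (X : End ℂ V)
    (hX : ∀ g, ρ g * X = X * ρ g) : ∃ c : ℂ, X = c • 1 := by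
  obtain ⟨hnt, h⟩ := hirr
  obtain ⟨μ, hμ⟩ := End.exists_eigenvalue X
  refine ⟨μ, ?_⟩
  rcases h (End.eigenspace X μ) (by
    rintro g _ ⟨v, hv, rfl⟩
    have hv' := End.mem_eigenspace_iff.1 hv
    rw [End.mem_eigenspace_iff]
    have := LinearMap.congr_fun (hX g) v
    simp only [End.mul_apply] at this
    rw [← this, hv', map_smul]) with h | h
  · exact absurd h hμ
  · ext v
    have : v ∈ End.eigenspace X μ := h ▸ Submodule.mem_top
    simpa using End.mem_eigenspace_iff.1 this

/-- If `ρ` is an irreducible finite-dimensional complex representation of `SL(2, ℤ/nℤ)`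
and `ρ(t)` has exactly three distinct eigenvalues, then `ρ` is three-dimensional. -/
theorem stmt2 (n : ℕ) (hn : 1 ≤ n)
    (V : Type) [AddCommGroup V] [Module ℂ V] [FiniteDimensional ℂ V]
    (ρ : Representation ℂ (SL2 n) V)
    (hirr : IsIrreducibleRep ρ)
    (h3 : (spectrum ℂ (ρ (tGen n))).ncard = 3) :
    Module.finrank ℂ V = 3 := by
  classical
  have : NeZero n := ⟨by omega⟩
  have hnt := hirr.1
  have hcomm : ∀ X : End ℂ V, ρ (wGen n) * X = X * ρ (wGen n) → ρ (tGen n) * X = X * ρ (tGen n) →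
      ∃ c : ℂ, X = c • 1 := by
    intro X h1 h2
    refine schur_scalar ρ hirr X fun g => ?_
    let H : Subgroup (SL2 n) :=
      { carrier := {g | ρ g * X = X * ρ g}
        one_mem' := by simp
        mul_mem' := by
          intro x y hx hy
          simp only [Set.mem_setOf_eq] at hx hy ⊢
          rw [map_mul, mul_assoc, hy, ← mul_assoc, hx, mul_assoc]
        inv_mem' := by
          intro x hx
          simp only [Set.mem_setOf_eq] at hx ⊢
          have e1 : ρ x⁻¹ * ρ x = 1 := by rw [← map_mul]; simp
          have e2 : ρ x * ρ x⁻¹ = 1 := by rw [← map_mul]; simp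
          calc ρ x⁻¹ * X = ρ x⁻¹ * (X * ρ x) * ρ x⁻¹ := by
                simp only [mul_assoc, e2, mul_one]
            _ = X * ρ x⁻¹ := by rw [← hx, ← mul_assoc, e1, one_mul] }
    exact gen_SL2 n hn H h2 h1 g
  have hneg1 : (wGen n) ^ 2 = -1 := by
    apply Subtype.ext
    rw [Matrix.SpecialLinearGroup.coe_pow]
    ext i j
    fin_cases i <;> fin_cases j <;> simp [wGen, pow_succ]
  have hneg2 : (wGen n * (tGen n)⁻¹) ^ 3 = -1 := by
    apply Subtype.ext
    rw [Matrix.SpecialLinearGroup.coe_pow, Matrix.SpecialLinearGroup.coe_mul,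
      Matrix.SpecialLinearGroup.coe_inv]
    ext i j
    fin_cases i <;> fin_cases j <;> simp [wGen, tGen, pow_succ, Matrix.adjugate_fin_two_of]
  obtain ⟨c, hc⟩ := schur_scalar ρ hirr (ρ (-1)) (fun g => by
    rw [← map_mul, ← map_mul]; simp)
  have hc0 : c ≠ 0 := by
    rintro rfl
    have : ρ (-1) * ρ (-1) = 1 := by rw [← map_mul]; simp
    rw [hc] at this
    simp at this
  have hw := rank_bound_pow (ρ (wGen n)) 2 (by norm_num) c hc0 (by rw [← map_pow, hneg1, hc])
  have hu := rank_bound_pow (ρ (wGen n * (tGen n)⁻¹)) 3 (by norm_num) c hc0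
    (by rw [← map_pow, hneg2, hc])
  have htn : (tGen n) ^ n = 1 := by
    apply Subtype.ext
    rw [tGen_pow_s2]; simp [Matrix.one_fin_two]
  have hss := semisimple_of_pow (ρ (tGen n)) n (by omega) 1 one_ne_zero
    (by rw [← map_pow, htn]; simp)
  have hfin : (spectrum ℂ (ρ (tGen n))).Finite := Set.finite_of_ncard_ne_zero (by omega)
  have hcard : hfin.toFinset.card = 3 := by rw [← Set.ncard_eq_toFinset_card _ hfin, h3]
  have ht := rank_bound_le (ρ (tGen n)) hss hfin.toFinset
    (fun μ hμ => hfin.mem_toFinset.2 hμ.mem_spectrum) 3 hcard.le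
  have hut : ρ (wGen n) = ρ (wGen n * (tGen n)⁻¹) * ρ (tGen n) := by
    rw [← map_mul]; simp
  have hS := scott (ρ (wGen n * (tGen n)⁻¹)) (ρ (tGen n)) (ρ (wGen n)) (ρ (wGen n)⁻¹)
    hut (by rw [← map_mul]; simp)
    (by
      intro X h1 h2
      refine hcomm X h2 ?_
      have e : ρ (tGen n) = ρ (wGen n * (tGen n)⁻¹)⁻¹ * ρ (wGen n) := by
        rw [← map_mul]; simp
      have e1 : ρ (wGen n * (tGen n)⁻¹)⁻¹ * ρ (wGen n * (tGen n)⁻¹) = 1 := by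
        rw [← map_mul, inv_mul_cancel, map_one]
      calc ρ (tGen n) * X = ρ (wGen n * (tGen n)⁻¹)⁻¹ * (X * ρ (wGen n)) := by
            rw [e, mul_assoc, h2]
        _ = ρ (wGen n * (tGen n)⁻¹)⁻¹ * (X * ρ (wGen n * (tGen n)⁻¹)) * ρ (tGen n) := by
            rw [hut]; simp only [mul_assoc]
        _ = X * ρ (tGen n) := by rw [← h1, ← mul_assoc, e1, one_mul])
    (by
      intro X h1 h2
      refine hcomm X ?_ h2
      rw [hut, mul_assoc, h2, ← mul_assoc, h1, mul_assoc])
  have hge : 3 ≤ finrank ℂ V := by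
    rw [← hcard, ← LinearMap.charpoly_natDegree (ρ (tGen n))]
    refine le_trans (Finset.card_le_card (t := (ρ (tGen n)).charpoly.roots.toFinset) ?_)
      ((Multiset.toFinset_card_le _).trans (Polynomial.card_roots' _))
    intro μ hμ
    rw [Multiset.mem_toFinset, Polynomial.mem_roots (LinearMap.charpoly_monic _).ne_zero]
    exact (Module.End.mem_spectrum_iff_isRoot_charpoly _ _).1 (hfin.mem_toFinset.1 hμ)
  have hle : finrank ℂ V ^ 2 ≤ 12 := by omega
  have : finrank ℂ V < 4 := by
    by_contra h
    push Not at h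
    nlinarith
  omega
end
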